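/- Suppose u is a nonnegative solution of -Δu + e^u - 1 = 0 in Ω \ K where K ⊂ Ω is compact with Lebesgue measure zero, and e^u ∈ L¹(Ω \ K). If there exist η_n ∈ C_c²(Ω) with 0 ≤ η_n ≤ 1, η_n = 1 near K, and ‖Δη_n‖_{L_{P*}} + ‖η_n‖_{L¹} → 0, then u extends to a distributional solution of -Δu + e^u - 1 = 0 in all of Ω. -/

import Mathlib

open MeasureTheory Filter
open scoped Topology

noncomputable section

/-- `P*(t) = (|t|+1) ln(|t|+1) - |t|`. -/
def Pstar (t : ℝ) : ℝ := (|t| + 1) * Real.log (|t| + 1) - |t|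

/-- The Laplacian of `f : ℝ^N → ℝ`, as the trace of the second derivative. -/
def laplacian {N : ℕ} (f : EuclideanSpace ℝ (Fin N) → ℝ)
    (x : EuclideanSpace ℝ (Fin N)) : ℝ :=
  ∑ i : Fin N, iteratedFDeriv ℝ 2 f x (fun _ => EuclideanSpace.single i (1 : ℝ))

/-!
Test the equation in `Ω \ K` with `ζ - ζ η`, where `η` is a capacity competitor equal to `1` near
`K`. The zeroth-order terms containing `η` vanish in the limit because `η → 0` in `L¹` with
`|η| ≤ 1`. What remains is `∫ u (ζ Δη + 2 ∇ζ · ∇η)`. Since `P*` is dual to the exponential, Young's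
inequality bounds `∫ |u| |Δη|` by the Luxemburg norm of `Δη` times `∫ e^|u| + 1`. The same estimate
with `u = 1` controls `‖Δη‖₁`, and hence `∫ |∇η|² = -∫ η Δη ≤ ‖Δη‖₁`; as `u ∈ L²`, the gradient
term is handled by Cauchy–Schwarz.
-/

open scoped Laplacian Gradient RealInnerProductSpace

section Orlicz

theorem Pstar_zero : Pstar 0 = 0 := by simp [Pstar]

theorem continuous_Pstar : Continuous Pstar := by
  unfold Pstar
  fun_prop (disch := intro t; positivity)

-- `Pstar` is the Legendre transform of `a ↦ exp a - a - 1`, attained at `a = log (|t| + 1)`.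
theorem mul_abs_le_exp_sub_add_Pstar (a t : ℝ) :
    a * |t| ≤ (Real.exp a - a - 1) + Pstar t := by
  have hpos : 0 < |t| + 1 := by positivity
  have htangent : a - Real.log (|t| + 1) + 1 ≤ Real.exp a / (|t| + 1) := by
    simpa only [Real.exp_sub, Real.exp_log hpos] using
      Real.add_one_le_exp (a - Real.log (|t| + 1))
  rw [le_div_iff₀ hpos] at htangent
  unfold Pstar
  linarith

theorem abs_mul_abs_le_mul_exp_add_Pstar {c : ℝ} (hc : 0 < c) (a t : ℝ) :
    |a| * |t| ≤ c * (Real.exp |a| + Pstar (t / c)) := by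
  have hscale : |t| = c * |t / c| := by
    rw [abs_div, abs_of_pos hc, mul_div_cancel₀ _ hc.ne']
  calc |a| * |t| = c * (|a| * |t / c|) := by rw [hscale]; ring
    _ ≤ c * (Real.exp |a| + Pstar (t / c)) := by
      gcongr
      linarith [mul_abs_le_exp_sub_add_Pstar |a| (t / c), abs_nonneg a]

variable {α : Type*} [MeasurableSpace α] {μ : Measure α}

theorem integral_abs_mul_abs_le_of_integral_Pstar_le_one {a w : α → ℝ} {c : ℝ} (hc : 0 < c)
    (ha : Integrable (fun x => Real.exp |a x|) μ)
    (hw : Integrable (fun x => Pstar (w x / c)) μ) (hw1 : ∫ x, Pstar (w x / c) ∂μ ≤ 1) :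
    ∫ x, |a x| * |w x| ∂μ ≤ c * ((∫ x, Real.exp |a x| ∂μ) + 1) :=
  calc ∫ x, |a x| * |w x| ∂μ
      ≤ ∫ x, c * (Real.exp |a x| + Pstar (w x / c)) ∂μ :=
        integral_mono_of_nonneg (.of_forall fun _ => by positivity) ((ha.add hw).const_mul c)
          (.of_forall fun x => abs_mul_abs_le_mul_exp_add_Pstar hc (a x) (w x))
    _ = c * ((∫ x, Real.exp |a x| ∂μ) + ∫ x, Pstar (w x / c) ∂μ) := by
        rw [integral_const_mul, integral_add ha hw]
    _ ≤ c * ((∫ x, Real.exp |a x| ∂μ) + 1) := by gcongr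

theorem isFiniteMeasure_of_integrable_exp_abs {u : α → ℝ}
    (hu : Integrable (fun x => Real.exp |u x|) μ) : IsFiniteMeasure μ := by
  have hone : Integrable (fun _ => (1 : ℝ)) μ :=
    hu.mono' aestronglyMeasurable_const (.of_forall fun x => by simp)
  exact (integrable_const_iff.1 hone).resolve_left one_ne_zero

theorem memLp_two_of_integrable_exp_abs {u : α → ℝ} (hu : AEStronglyMeasurable u μ)
    (hexp : Integrable (fun x => Real.exp |u x|) μ) : MemLp u 2 μ := by
  refine (memLp_two_iff_integrable_sq hu).2 <|
    (hexp.const_mul 2).mono' (hu.pow 2) (.of_forall fun x => ?_)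
  rw [Real.norm_of_nonneg (sq_nonneg _), ← sq_abs]
  linarith [Real.quadratic_le_exp_of_nonneg (abs_nonneg (u x)), abs_nonneg (u x)]

theorem integral_abs_mul_norm_le_sqrt_mul_sqrt {E : Type*} [NormedAddCommGroup E] {u : α → ℝ}
    {v : α → E} (hu : MemLp u 2 μ) (hv : MemLp v 2 μ) :
    ∫ x, |u x| * ‖v x‖ ∂μ ≤ √(∫ x, u x ^ 2 ∂μ) * √(∫ x, ‖v x‖ ^ 2 ∂μ) := by
  have h := integral_mul_norm_le_Lp_mul_Lq (μ := μ) Real.HolderConjugate.two_two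
    (f := u) (g := fun x => ‖v x‖) (by simpa using hu) (by simpa using hv.norm)
  simpa [Real.sqrt_eq_rpow] using h

theorem tendsto_integral_mul_of_tendsto_integral_abs {g : α → ℝ} (hg : Integrable g μ)
    {η : ℕ → α → ℝ} {C : ℝ} (hη : ∀ n, Integrable (η n) μ) (hbound : ∀ n x, |η n x| ≤ C)
    (hlim : Tendsto (fun n => ∫ x, |η n x| ∂μ) atTop (𝓝 0)) :
    Tendsto (fun n => ∫ x, g x * η n x ∂μ) atTop (𝓝 0) := by
  have hL1 : Tendsto (fun n => eLpNorm (η n - 0) 1 μ) atTop (𝓝 0) := by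
    have hnorm : ∀ n, eLpNorm (η n - 0) 1 μ = ENNReal.ofReal (∫ x, |η n x| ∂μ) := fun n => by
      rw [sub_zero, eLpNorm_one_eq_lintegral_enorm,
        ← ofReal_integral_norm_eq_lintegral_enorm (hη n)]
      rfl
    simpa only [hnorm, ENNReal.ofReal_zero] using ENNReal.tendsto_ofReal hlim
  refine tendsto_of_subseq_tendsto fun ns hns => ?_
  obtain ⟨ms, -, hae⟩ := (tendstoInMeasure_of_tendsto_eLpNorm one_ne_zero
    (fun n => (hη (ns n)).aestronglyMeasurable) aestronglyMeasurable_zero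
    (hL1.comp hns)).exists_seq_tendsto_ae
  refine ⟨ms, ?_⟩
  rw [← integral_zero α ℝ (μ := μ)]
  refine tendsto_integral_of_dominated_convergence (fun x => |g x| * C)
    (fun k => (hg.aestronglyMeasurable.mul (hη _).aestronglyMeasurable))
    (hg.abs.mul_const C) (fun k => .of_forall fun x => ?_) ?_
  · rw [Real.norm_eq_abs, abs_mul]
    gcongr
    exact hbound _ x
  · filter_upwards [hae] with x hx
    simpa using hx.const_mul (g x)

end Orlicz

theorem tsupport_sub_mul_subset {X : Type*} [TopologicalSpace X] {ζ η : X → ℝ} {Ω K : Set X}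
    (hζ : tsupport ζ ⊆ Ω) (hη : ∀ᶠ x in 𝓝ˢ K, η x = 1) : tsupport (ζ - ζ * η) ⊆ Ω \ K := by
  refine fun x hx => ⟨hζ (closure_mono ?_ hx), fun hxK => ?_⟩
  · exact Function.support_subset_iff'.2 fun y hy => by simp [Function.notMem_support.1 hy]
  · refine notMem_tsupport_iff_eventuallyEq.2 ?_ hx
    filter_upwards [eventually_nhdsSet_iff_forall.1 hη x hxK] with y hy
    simp [hy]

section DirectionalDerivative

variable {E : Type*} [NormedAddCommGroup E] [NormedSpace ℝ E]

theorem fderiv_fderiv_apply_mul {f g : E → ℝ} {x : E} (v : E) (hf : ContDiffAt ℝ 2 f x)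
    (hg : ContDiffAt ℝ 2 g x) :
    fderiv ℝ (fun y => fderiv ℝ (f * g) y v) x v =
      f x * fderiv ℝ (fun y => fderiv ℝ g y v) x v +
        g x * fderiv ℝ (fun y => fderiv ℝ f y v) x v + 2 * (fderiv ℝ f x v * fderiv ℝ g x v) := by
  have hfst : (fun y => fderiv ℝ (f * g) y v) =ᶠ[𝓝 x]
      fun y => f y * fderiv ℝ g y v + g y * fderiv ℝ f y v := by
    filter_upwards [hf.eventually (by simp), hg.eventually (by simp)] with y hfy hgy
    simp [fderiv_mul (hfy.differentiableAt two_ne_zero) (hgy.differentiableAt two_ne_zero)]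
  have hdiff : ∀ {h : E → ℝ}, ContDiffAt ℝ 2 h x →
      DifferentiableAt ℝ h x ∧ DifferentiableAt ℝ (fun y => fderiv ℝ h y v) x := fun hh =>
    ⟨hh.differentiableAt two_ne_zero,
      ((hh.fderiv_right (m := 1) (by norm_num)).differentiableAt one_ne_zero).clm_apply
        (differentiableAt_const v)⟩
  obtain ⟨hf₀, hf₁⟩ := hdiff hf
  obtain ⟨hg₀, hg₁⟩ := hdiff hg
  rw [hfst.fderiv_eq, fderiv_fun_add (hf₀.fun_mul hg₁) (hg₀.fun_mul hf₁),
    fderiv_fun_mul hf₀ hg₁, fderiv_fun_mul hg₀ hf₁]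
  simp only [add_apply, smul_apply, smul_eq_mul]
  ring

theorem integral_fderiv_apply_eq_zero [FiniteDimensional ℝ E] [MeasurableSpace E] [BorelSpace E]
    {F : Type*} [NormedAddCommGroup F] [NormedSpace ℝ F] {μ : Measure E} [μ.IsAddHaarMeasure]
    {f : E → F} (hf : ContDiff ℝ 1 f)
    (hsupp : HasCompactSupport f) (v : E) : ∫ x, fderiv ℝ f x v ∂μ = 0 := by
  have hint : Integrable f μ := hf.continuous.integrable_of_hasCompactSupport hsupp
  have hint' : Integrable (fun x => fderiv ℝ f x v) μ :=
    ((hf.continuous_fderiv one_ne_zero).clm_apply continuous_const).integrable_of_hasCompactSupport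
      (hsupp.fderiv_apply ℝ v)
  simpa using integral_smul_fderiv_eq_neg_fderiv_smul_of_integrable (μ := μ) (v := v)
    (f := fun _ => (1 : ℝ)) (by simp) (by simpa using hint') (by simpa using hint)
    (fun x _ => differentiableAt_const 1) (fun x _ => hf.differentiable one_ne_zero x)

end DirectionalDerivative

section Laplacian

variable {E : Type*} [NormedAddCommGroup E] [InnerProductSpace ℝ E] [FiniteDimensional ℝ E]
  {F : Type*} [NormedAddCommGroup F] [NormedSpace ℝ F]

theorem tsupport_gradient_subset (f : E → ℝ) : tsupport (∇ f) ⊆ tsupport f :=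
  (tsupport_comp_subset (map_zero (InnerProductSpace.toDual ℝ E).symm) _).trans
    (tsupport_fderiv_subset ℝ)

theorem tsupport_laplacian_subset (f : E → F) : tsupport (Δ f) ⊆ tsupport f := by
  intro x hx
  contrapose! hx
  rw [notMem_tsupport_iff_eventuallyEq] at hx ⊢
  refine (InnerProductSpace.laplacian_congr_nhds hx).trans (.of_eq ?_)
  exact InnerProductSpace.laplacian_const (c := (0 : F))

theorem hasCompactSupport_gradient {f : E → ℝ} (hf : HasCompactSupport f) :
    HasCompactSupport (∇ f) :=
  hf.mono' ((subset_tsupport _).trans (tsupport_gradient_subset f))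

theorem hasCompactSupport_laplacian {f : E → F} (hf : HasCompactSupport f) :
    HasCompactSupport (Δ f) :=
  hf.mono' ((subset_tsupport _).trans (tsupport_laplacian_subset f))

theorem continuous_gradient {f : E → ℝ} (hf : ContDiff ℝ 1 f) : Continuous (∇ f) :=
  (InnerProductSpace.toDual ℝ E).symm.continuous.comp (hf.continuous_fderiv one_ne_zero)

theorem continuous_laplacian {f : E → F} (hf : ContDiff ℝ 2 f) : Continuous (Δ f) := by
  rw [InnerProductSpace.laplacian_eq_iteratedFDeriv_stdOrthonormalBasis]
  have : Continuous (iteratedFDeriv ℝ 2 f) := hf.continuous_iteratedFDeriv le_rfl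
  fun_prop

theorem laplacian_eq_sum_fderiv_fderiv_apply {ι : Type*} [Fintype ι] (b : OrthonormalBasis ι ℝ E)
    {f : E → F} {x : E} (hf : ContDiffAt ℝ 2 f x) :
    Δ f x = ∑ i, fderiv ℝ (fun y => fderiv ℝ f y (b i)) x (b i) := by
  have hd : DifferentiableAt ℝ (fderiv ℝ f) x :=
    (hf.fderiv_right (m := 1) (by norm_num)).differentiableAt one_ne_zero
  rw [InnerProductSpace.laplacian_eq_iteratedFDeriv_orthonormalBasis f b]
  simp [iteratedFDeriv_two_apply, fderiv_clm_apply hd (differentiableAt_const _)]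

theorem laplacian_mul {f g : E → ℝ} {x : E} (hf : ContDiffAt ℝ 2 f x) (hg : ContDiffAt ℝ 2 g x) :
    Δ (f * g) x = f x * Δ g x + g x * Δ f x + 2 * ⟪∇ f x, ∇ g x⟫ := by
  let b := stdOrthonormalBasis ℝ E
  have hfg : ContDiffAt ℝ 2 (f * g) x := hf.mul hg
  have hinner : ⟪∇ f x, ∇ g x⟫ = ∑ i, fderiv ℝ f x (b i) * fderiv ℝ g x (b i) := by
    rw [← b.sum_inner_mul_inner]
    simp
  rw [laplacian_eq_sum_fderiv_fderiv_apply b hfg, hinner,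
    laplacian_eq_sum_fderiv_fderiv_apply b hf, laplacian_eq_sum_fderiv_fderiv_apply b hg]
  simp only [Finset.mul_sum, ← Finset.sum_add_distrib]
  exact Finset.sum_congr rfl fun i _ => fderiv_fderiv_apply_mul (b i) hf hg

theorem laplacian_sub_mul {f g : E → ℝ} {x : E} (hf : ContDiffAt ℝ 2 f x)
    (hg : ContDiffAt ℝ 2 g x) :
    Δ (f - f * g) x = Δ f x - Δ f x * g x - (f x * Δ g x + 2 * ⟪∇ f x, ∇ g x⟫) := by
  have hfg : ContDiffAt ℝ 2 (f * g) x := hf.mul hg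
  rw [hf.laplacian_sub hfg, laplacian_mul hf hg]
  ring

variable [MeasurableSpace E] [BorelSpace E]

theorem memLp_gradient {μ : Measure E} [IsFiniteMeasureOnCompacts μ] {f : E → ℝ}
    (hf : ContDiff ℝ 1 f) (hsupp : HasCompactSupport f) (p : ENNReal) : MemLp (∇ f) p μ :=
  (continuous_gradient hf).memLp_of_hasCompactSupport (hasCompactSupport_gradient hsupp)

variable {μ : Measure E} [μ.IsAddHaarMeasure]

theorem integral_laplacian_eq_zero {f : E → F} (hf : ContDiff ℝ 2 f)
    (hsupp : HasCompactSupport f) : ∫ x, Δ f x ∂μ = 0 := by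
  let b := stdOrthonormalBasis ℝ E
  have hC1 : ∀ i, ContDiff ℝ 1 (fun x => fderiv ℝ f x (b i)) := fun i =>
    (hf.fderiv_right (by norm_num)).clm_apply contDiff_const
  have hsupp' : ∀ i, HasCompactSupport (fun x => fderiv ℝ f x (b i)) := fun i =>
    hsupp.fderiv_apply ℝ (b i)
  simp only [laplacian_eq_sum_fderiv_fderiv_apply b hf.contDiffAt]
  rw [integral_finsetSum _ fun i _ =>
    (((hC1 i).continuous_fderiv one_ne_zero).clm_apply
      continuous_const).integrable_of_hasCompactSupport ((hsupp' i).fderiv_apply ℝ (b i))]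
  exact Finset.sum_eq_zero fun i _ => integral_fderiv_apply_eq_zero (hC1 i) (hsupp' i) (b i)

theorem integral_norm_gradient_sq {f : E → ℝ} (hf : ContDiff ℝ 2 f)
    (hsupp : HasCompactSupport f) : ∫ x, ‖∇ f x‖ ^ 2 ∂μ = -∫ x, f x * Δ f x ∂μ := by
  have hgrad : Integrable (fun x => ‖∇ f x‖ ^ 2) μ :=
    (memLp_gradient (hf.of_le one_le_two) hsupp 2).norm.integrable_sq
  have hlap : Integrable (fun x => f x * Δ f x) μ :=
    (hf.continuous.mul (continuous_laplacian hf)).integrable_of_hasCompactSupport hsupp.mul_right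
  have hsq : ∀ x, Δ (f * f) x = 2 * (f x * Δ f x + ‖∇ f x‖ ^ 2) := fun x => by
    rw [laplacian_mul hf.contDiffAt hf.contDiffAt, real_inner_self_eq_norm_sq]
    ring
  have hzero := integral_laplacian_eq_zero (μ := μ) (hf.mul hf) (hsupp.mul_right (f' := f))
  have hzero' : 2 * ((∫ x, f x * Δ f x ∂μ) + ∫ x, ‖∇ f x‖ ^ 2 ∂μ) = 0 := by
    rw [← integral_add hlap hgrad, ← integral_const_mul, ← hzero]
    exact integral_congr_ae (.of_forall fun x => (hsq x).symm)
  linarith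

theorem laplacian_eq_innerProductSpace_laplacian {N : ℕ} (f : EuclideanSpace ℝ (Fin N) → ℝ) :
    laplacian f = Δ f := by
  rw [InnerProductSpace.laplacian_eq_iteratedFDeriv_orthonormalBasis f
    (EuclideanSpace.basisFun (Fin N) ℝ)]
  ext x
  refine Finset.sum_congr rfl fun i _ => congrArg _ ?_
  ext j
  fin_cases j <;> simp

end Laplacian

section RemovableSingularity

variable {E : Type*} [NormedAddCommGroup E] [InnerProductSpace ℝ E] [FiniteDimensional ℝ E]
  [MeasurableSpace E] [BorelSpace E]

/-- `u` is a distributional solution of `-Δu + f = 0` in `U`, in the weak form tested against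
`C²` functions with compact support in `U`. It is meaningful for `u` and `f` locally integrable in
`U`, since the integral of a non-integrable function is `0`. -/
def IsDistribSolution (u f : E → ℝ) (U : Set E) : Prop :=
  ∀ ζ : E → ℝ, ContDiff ℝ 2 ζ → HasCompactSupport ζ → tsupport ζ ⊆ U →
    ∫ x in U, (-(u x) * Δ ζ x + f x * ζ x) = 0

theorem integrable_neg_mul_laplacian_add_mul {μ : Measure E} {u f ζ : E → ℝ}
    (hu : Integrable u μ) (hf : Integrable f μ) (hζ : ContDiff ℝ 2 ζ) (hζc : HasCompactSupport ζ) :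
    Integrable (fun x => -(u x) * Δ ζ x + f x * ζ x) μ :=
  (hu.neg.locallyIntegrable.integrable_smul_right_of_hasCompactSupport
    (continuous_laplacian hζ) (hasCompactSupport_laplacian hζc)).add
  (hf.locallyIntegrable.integrable_smul_right_of_hasCompactSupport hζ.continuous hζc)

/-- `η` competes in the `C_{Δ^{L ln L}}`-capacity of `K` relative to `Ω`, with
`‖Δη‖_{L_{P*}(Ω)} ≤ c`. This Luxemburg norm bound is encoded by the modular inequality
`∫_Ω P*(Δη / c) ≤ 1`; sign-changing `η` are allowed. -/
structure IsCapacityCompetitor (Ω K : Set E) (η : E → ℝ) (c : ℝ) : Prop where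
  contDiff : ContDiff ℝ 2 η
  hasCompactSupport : HasCompactSupport η
  tsupport_subset : tsupport η ⊆ Ω
  abs_le_one : ∀ x, |η x| ≤ 1
  eventually_eq_one : ∀ᶠ x in 𝓝ˢ K, η x = 1
  pos : 0 < c
  integral_Pstar_le_one : ∫ x in Ω, Pstar (Δ η x / c) ≤ 1

namespace IsCapacityCompetitor

variable {Ω K : Set E} {η ζ u f : E → ℝ} {c M : ℝ}

theorem integral_abs_mul_abs_laplacian_le (h : IsCapacityCompetitor Ω K η c)
    (hu : IntegrableOn (fun x => Real.exp |u x|) Ω) :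
    ∫ x in Ω, |u x| * |Δ η x| ≤ c * ((∫ x in Ω, Real.exp |u x|) + 1) := by
  have hcont : Continuous fun x => Pstar (Δ η x / c) :=
    continuous_Pstar.comp ((continuous_laplacian h.contDiff).div_const c)
  have hsupp : HasCompactSupport fun x => Pstar (Δ η x / c) :=
    (hasCompactSupport_laplacian h.hasCompactSupport).comp_left (g := fun t => Pstar (t / c))
      (by simp [Pstar_zero])
  exact integral_abs_mul_abs_le_of_integral_Pstar_le_one h.pos hu
    (hcont.integrable_of_hasCompactSupport hsupp).integrableOn h.integral_Pstar_le_one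

theorem integral_norm_gradient_sq_le [IsFiniteMeasure (volume.restrict Ω)]
    (h : IsCapacityCompetitor Ω K η c) :
    ∫ x in Ω, ‖∇ η x‖ ^ 2 ≤ c * (Real.exp 1 * volume.real Ω + 1) := by
  have hvanish : ∀ x ∉ Ω, η x = 0 ∧ ∇ η x = 0 := fun x hx =>
    have hx' : x ∉ tsupport η := fun hx' => hx (h.tsupport_subset hx')
    ⟨image_eq_zero_of_notMem_tsupport hx',
      image_eq_zero_of_notMem_tsupport (mt (tsupport_gradient_subset η ·) hx')⟩
  have hΔ : IntegrableOn (fun x => |1| * |Δ η x|) Ω := by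
    simpa using ((continuous_laplacian h.contDiff).integrable_of_hasCompactSupport
      (hasCompactSupport_laplacian h.hasCompactSupport)).abs.integrableOn
  calc ∫ x in Ω, ‖∇ η x‖ ^ 2 = ∫ x, ‖∇ η x‖ ^ 2 :=
        setIntegral_eq_integral_of_forall_compl_eq_zero fun x hx => by simp [hvanish x hx]
    _ = ∫ x in Ω, -(η x * Δ η x) := by
        rw [integral_norm_gradient_sq h.contDiff h.hasCompactSupport, ← integral_neg,
          setIntegral_eq_integral_of_forall_compl_eq_zero fun x hx => by simp [hvanish x hx]]
    _ ≤ ∫ x in Ω, |1| * |Δ η x| := by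
        refine (Real.le_norm_self _).trans <|
          norm_integral_le_of_norm_le hΔ (.of_forall fun x => ?_)
        rw [norm_neg, Real.norm_eq_abs, abs_mul, abs_one]
        gcongr
        exact h.abs_le_one x
    _ ≤ c * ((∫ _ in Ω, Real.exp |1|) + 1) :=
        h.integral_abs_mul_abs_laplacian_le (integrable_const _)
    _ = c * (Real.exp 1 * volume.real Ω + 1) := by simp [mul_comm]

theorem integral_abs_mul_norm_gradient_le [IsFiniteMeasure (volume.restrict Ω)]
    (h : IsCapacityCompetitor Ω K η c) (hu : MemLp u 2 (volume.restrict Ω)) :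
    ∫ x in Ω, |u x| * ‖∇ η x‖ ≤
      √(∫ x in Ω, u x ^ 2) * √(c * (Real.exp 1 * volume.real Ω + 1)) :=
  (integral_abs_mul_norm_le_sqrt_mul_sqrt hu
    (memLp_gradient (h.contDiff.of_le one_le_two) h.hasCompactSupport 2)).trans <| by
    gcongr
    exact h.integral_norm_gradient_sq_le

theorem abs_integral_mul_commutator_le (h : IsCapacityCompetitor Ω K η c)
    (hu : AEStronglyMeasurable u (volume.restrict Ω))
    (hexp : IntegrableOn (fun x => Real.exp |u x|) Ω)
    (hζ : ∀ x, |ζ x| ≤ M) (hζ' : ∀ x, ‖∇ ζ x‖ ≤ M) :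
    |∫ x in Ω, u x * (ζ x * Δ η x + 2 * ⟪∇ ζ x, ∇ η x⟫)| ≤
      M * (c * ((∫ x in Ω, Real.exp |u x|) + 1)) +
        2 * M * (√(∫ x in Ω, u x ^ 2) * √(c * (Real.exp 1 * volume.real Ω + 1))) := by
  have : IsFiniteMeasure (volume.restrict Ω) := isFiniteMeasure_of_integrable_exp_abs hexp
  have hu₂ := memLp_two_of_integrable_exp_abs hu hexp
  have hM : 0 ≤ M := (abs_nonneg _).trans (hζ 0)
  have hΔ : IntegrableOn (fun x => |u x| * |Δ η x|) Ω := by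
    have hu₁ := (hu₂.integrable one_le_two).locallyIntegrable
    simpa only [IntegrableOn, smul_eq_mul, abs_mul] using
      (hu₁.integrable_smul_right_of_hasCompactSupport (continuous_laplacian h.contDiff)
        (hasCompactSupport_laplacian h.hasCompactSupport)).abs
  have hgrad : IntegrableOn (fun x => |u x| * ‖∇ η x‖) Ω :=
    hu₂.norm.integrable_mul
      (memLp_gradient (h.contDiff.of_le one_le_two) h.hasCompactSupport 2).norm
  have hpoint : ∀ x, ‖u x * (ζ x * Δ η x + 2 * ⟪∇ ζ x, ∇ η x⟫)‖ ≤
      M * (|u x| * |Δ η x|) + 2 * M * (|u x| * ‖∇ η x‖) := fun x =>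
    calc ‖u x * (ζ x * Δ η x + 2 * ⟪∇ ζ x, ∇ η x⟫)‖
        ≤ |u x| * (|ζ x| * |Δ η x| + 2 * (‖∇ ζ x‖ * ‖∇ η x‖)) := by
          rw [Real.norm_eq_abs, abs_mul]
          gcongr
          refine (abs_add_le _ _).trans ?_
          rw [abs_mul, abs_mul, abs_two]
          gcongr
          exact abs_real_inner_le_norm _ _
      _ ≤ |u x| * (M * |Δ η x| + 2 * (M * ‖∇ η x‖)) := by
          gcongr
          exacts [hζ x, hζ' x]
      _ = M * (|u x| * |Δ η x|) + 2 * M * (|u x| * ‖∇ η x‖) := by ring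
  calc |∫ x in Ω, u x * (ζ x * Δ η x + 2 * ⟪∇ ζ x, ∇ η x⟫)|
      ≤ ∫ x in Ω, (M * (|u x| * |Δ η x|) + 2 * M * (|u x| * ‖∇ η x‖)) :=
        norm_integral_le_of_norm_le ((hΔ.const_mul M).add (hgrad.const_mul (2 * M)))
          (.of_forall hpoint)
    _ = M * (∫ x in Ω, |u x| * |Δ η x|) + 2 * M * ∫ x in Ω, |u x| * ‖∇ η x‖ := by
        rw [integral_add (hΔ.const_mul M) (hgrad.const_mul (2 * M)), integral_const_mul,
          integral_const_mul]
    _ ≤ _ := by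
        gcongr
        · exact h.integral_abs_mul_abs_laplacian_le hexp
        · exact h.integral_abs_mul_norm_gradient_le hu₂

theorem tendsto_integral_mul_commutator {η : ℕ → E → ℝ} {c : ℕ → ℝ}
    (h : ∀ n, IsCapacityCompetitor Ω K (η n) (c n)) (hc : Tendsto c atTop (𝓝 0))
    (hu : AEStronglyMeasurable u (volume.restrict Ω))
    (hexp : IntegrableOn (fun x => Real.exp |u x|) Ω)
    (hζ : ContDiff ℝ 2 ζ) (hζc : HasCompactSupport ζ) :
    Tendsto (fun n => ∫ x in Ω, u x * (ζ x * Δ (η n) x + 2 * ⟪∇ ζ x, ∇ (η n) x⟫)) atTop (𝓝 0) := by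
  obtain ⟨M₀, hM₀⟩ := hζc.exists_bound_of_continuous hζ.continuous
  obtain ⟨M₁, hM₁⟩ := (hasCompactSupport_gradient hζc).exists_bound_of_continuous
    (continuous_gradient (hζ.of_le one_le_two))
  let M := max M₀ M₁
  have hbound : Continuous fun t : ℝ => M * (t * ((∫ x in Ω, Real.exp |u x|) + 1)) +
      2 * M * (√(∫ x in Ω, u x ^ 2) * √(t * (Real.exp 1 * volume.real Ω + 1))) := by
    fun_prop
  exact squeeze_zero_norm
    (fun n => (h n).abs_integral_mul_commutator_le hu hexp
      (fun x => (hM₀ x).trans (le_max_left M₀ M₁)) (fun x => (hM₁ x).trans (le_max_right M₀ M₁)))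
    (by simpa [Function.comp_def] using (hbound.tendsto 0).comp hc)

theorem integral_eq_integral_mul_sub (h : IsCapacityCompetitor Ω K η c) (hK : volume K = 0)
    (hu : IntegrableOn u Ω) (hf : IntegrableOn f Ω) (hsol : IsDistribSolution u f (Ω \ K))
    (hζ : ContDiff ℝ 2 ζ) (hζc : HasCompactSupport ζ) (hζΩ : tsupport ζ ⊆ Ω) :
    ∫ x in Ω, (-(u x) * Δ ζ x + f x * ζ x) =
      (∫ x in Ω, (-(u x) * Δ ζ x + f x * ζ x) * η x) -
        ∫ x in Ω, u x * (ζ x * Δ η x + 2 * ⟪∇ ζ x, ∇ η x⟫) := by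
  have htest := hsol (ζ - ζ * η) (hζ.sub (hζ.mul h.contDiff)) (hζc.sub hζc.mul_right)
    (tsupport_sub_mul_subset hζΩ h.eventually_eq_one)
  rw [setIntegral_congr_set (sdiff_null_ae_eq_self hK)] at htest
  have hF : IntegrableOn (fun x => -(u x) * Δ ζ x + f x * ζ x) Ω :=
    integrable_neg_mul_laplacian_add_mul hu hf hζ hζc
  have hFη : IntegrableOn (fun x => (-(u x) * Δ ζ x + f x * ζ x) * η x) Ω :=
    hF.locallyIntegrable.integrable_smul_right_of_hasCompactSupport h.contDiff.continuous
      h.hasCompactSupport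
  have hC : IntegrableOn (fun x => u x * (ζ x * Δ η x + 2 * ⟪∇ ζ x, ∇ η x⟫)) Ω := by
    refine hu.locallyIntegrable.integrable_smul_right_of_hasCompactSupport ?_
      (.intro hζc fun x hx => ?_)
    · exact (hζ.continuous.mul (continuous_laplacian h.contDiff)).add <|
        ((continuous_gradient (hζ.of_le one_le_two)).inner
          (continuous_gradient (h.contDiff.of_le one_le_two))).const_mul 2
    · simp [image_eq_zero_of_notMem_tsupport hx,
        image_eq_zero_of_notMem_tsupport (mt (tsupport_gradient_subset ζ ·) hx)]
  rw [← integral_sub hFη hC, ← sub_eq_zero, ← htest]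
  refine (integral_sub hF (hFη.sub hC)).symm.trans <|
    integral_congr_ae (.of_forall fun x => ?_)
  simp only [laplacian_sub_mul hζ.contDiffAt h.contDiff.contDiffAt, Pi.sub_apply, Pi.mul_apply]
  ring

end IsCapacityCompetitor

theorem removable_singularity_moderate_general {Ω K : Set E} (hK : volume K = 0) {u f : E → ℝ}
    (hu : AEStronglyMeasurable u (volume.restrict (Ω \ K)))
    (huexp : IntegrableOn (fun x => Real.exp |u x|) (Ω \ K)) (hf : IntegrableOn f (Ω \ K))
    (hsol : IsDistribSolution u f (Ω \ K)) {η : ℕ → E → ℝ} {c : ℕ → ℝ}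
    (hη : ∀ n, IsCapacityCompetitor Ω K (η n) (c n))
    (hlim : Tendsto (fun n => c n + ∫ x in Ω, |η n x|) atTop (𝓝 0)) :
    IsDistribSolution u f Ω := by
  intro ζ hζ hζc hζΩ
  have hΩK : volume.restrict (Ω \ K) = volume.restrict Ω :=
    Measure.restrict_congr_set (sdiff_null_ae_eq_self hK)
  rw [IntegrableOn, hΩK] at huexp hf
  rw [hΩK] at hu
  have : IsFiniteMeasure (volume.restrict Ω) := isFiniteMeasure_of_integrable_exp_abs huexp
  have hu₁ : IntegrableOn u Ω := (memLp_two_of_integrable_exp_abs hu huexp).integrable one_le_two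
  have hηnonneg : ∀ n, 0 ≤ ∫ x in Ω, |η n x| := fun n => integral_nonneg fun x => abs_nonneg _
  have hc : Tendsto c atTop (𝓝 0) :=
    squeeze_zero (fun n => (hη n).pos.le) (fun n => le_add_of_nonneg_right (hηnonneg n)) hlim
  have hη₁ : Tendsto (fun n => ∫ x in Ω, |η n x|) atTop (𝓝 0) :=
    squeeze_zero hηnonneg (fun n => le_add_of_nonneg_left (hη n).pos.le) hlim
  have hcutoff := tendsto_integral_mul_of_tendsto_integral_abs
    (integrable_neg_mul_laplacian_add_mul hu₁ hf hζ hζc)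
    (fun n => ((hη n).contDiff.continuous.integrable_of_hasCompactSupport
      (hη n).hasCompactSupport).restrict) (fun n => (hη n).abs_le_one) hη₁
  have hcomm := IsCapacityCompetitor.tendsto_integral_mul_commutator hη hc hu huexp hζ hζc
  have hdiff := hcutoff.sub hcomm
  rw [sub_zero] at hdiff
  exact tendsto_nhds_unique tendsto_const_nhds <| hdiff.congr fun n =>
    ((hη n).integral_eq_integral_mul_sub hK hu₁ hf hsol hζ hζc hζΩ).symm

end RemovableSingularity

/-- Moderate-solution case of Theorem E: a nonnegative solution of
`-Δu + e^u - 1 = 0` in `Ω \ K` with `e^u ∈ L¹(Ω \ K)` extends distributionally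
to all of `Ω`, provided there are `η_n ∈ C²_c(Ω)`, `0 ≤ η_n ≤ 1`, `η_n = 1` near
`K`, with `‖Δη_n‖_{L_{P*}} + ‖η_n‖_{L¹} → 0`. -/
theorem removable_singularity_moderate {N : ℕ}
    (Ω : Set (EuclideanSpace ℝ (Fin N))) (hΩo : IsOpen Ω)
    (hΩb : Bornology.IsBounded Ω)
    (K : Set (EuclideanSpace ℝ (Fin N))) (hK : IsCompact K) (hKΩ : K ⊆ Ω)
    (hK0 : volume K = 0)
    (u : EuclideanSpace ℝ (Fin N) → ℝ) (hum : Measurable u) (hu0 : ∀ x, 0 ≤ u x)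
    (huexp : IntegrableOn (fun x => Real.exp (u x)) (Ω \ K))
    (hsol : ∀ ζ : EuclideanSpace ℝ (Fin N) → ℝ, ContDiff ℝ 2 ζ →
      HasCompactSupport ζ → tsupport ζ ⊆ Ω \ K →
      ∫ x in Ω \ K, (-(u x) * laplacian ζ x + (Real.exp (u x) - 1) * ζ x) = 0)
    (η : ℕ → EuclideanSpace ℝ (Fin N) → ℝ)
    (hηreg : ∀ n, ContDiff ℝ 2 (η n)) (hηsupp : ∀ n, HasCompactSupport (η n))
    (hηsub : ∀ n, tsupport (η n) ⊆ Ω) (hη01 : ∀ n x, 0 ≤ η n x ∧ η n x ≤ 1)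
    (hη1 : ∀ n, ∃ V : Set (EuclideanSpace ℝ (Fin N)), IsOpen V ∧ K ⊆ V ∧
      ∀ x ∈ V, η n x = 1)
    (c : ℕ → ℝ) (hc0 : ∀ n, 0 < c n)
    (hcnorm : ∀ n, ∫ x in Ω, Pstar (laplacian (η n) x / c n) ≤ 1)
    (hto0 : Tendsto (fun n => c n + ∫ x in Ω, |η n x|) atTop (𝓝 0)) :
    ∀ ζ : EuclideanSpace ℝ (Fin N) → ℝ, ContDiff ℝ 2 ζ →
      HasCompactSupport ζ → tsupport ζ ⊆ Ω →
      ∫ x in Ω, (-(u x) * laplacian ζ x + (Real.exp (u x) - 1) * ζ x) = 0 := by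
  simp only [laplacian_eq_innerProductSpace_laplacian] at hsol hcnorm ⊢
  have hexp : IntegrableOn (fun x => Real.exp |u x|) (Ω \ K) := by
    simpa only [abs_of_nonneg, hu0] using huexp
  have := isFiniteMeasure_of_integrable_exp_abs hexp
  exact removable_singularity_moderate_general hK0 hum.aestronglyMeasurable hexp
    (huexp.sub (integrable_const 1)) hsol
    (fun n => ⟨hηreg n, hηsupp n, hηsub n,
      fun x => (abs_of_nonneg (hη01 n x).1).trans_le (hη01 n x).2,
      mem_nhdsSet_iff_exists.2 (hη1 n), hc0 n, hcnorm n⟩) hto0
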